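/- arXiv:2302.00596 — 2 statements merged into one kernel-verified Lean document; each statement's English description precedes it below -/
import Mathlib

section
/- For every integer n with 0 ≤ n ≤ N−1 and every sample point s = a + x with x ∈ {2, 3, …, N−1}, provided (s−1)·(σ(s−1) + (2s−1)·τ(s−1)) ≠ 0, the weighted Racah polynomials satisfy the three-term recurrence in the variable s: R̂_n(s) = A1·√(ρ(s)(2s+1)/(ρ(s−1)(2s−1)))·R̂_n(s−1) − B1·√(ρ(s)(2s+1)/(ρ(s−2)(2s−3)))·R̂_n(s−2), where A1 = (2s−1)·[σ(s−1) + (s−1)·τ(s−1) − 2·λ_n·s(s−1)] / [(s−1)·(σ(s−1) + (2s−1)·τ(s−1))] and B1 = s·σ(s−1) / [(s−1)·(σ(s−1) + (2s−1)·τ(s−1))]. -/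
open Finset

/-- Rising Pochhammer symbol `(x)_k = x (x+1) ⋯ (x+k-1)` for a real `x`. -/
noncomputable def pochR (x : ℝ) (k : ℕ) : ℝ := ∏ i ∈ Finset.range k, (x + i)

/-- The `n`-th Racah polynomial in Zhu's normalization. -/
noncomputable def racahR (a b α β : ℝ) (n : ℕ) (s : ℝ) : ℝ :=
  (1 / (Nat.factorial n : ℝ)) * pochR (a + b + α + 1) n * pochR (β + 1) n *
    pochR (a - b + 1) n *
    ∑ k ∈ Finset.range (n + 1),
      pochR (-(n : ℝ)) k * pochR (a - s) k * pochR (a + s + 1) k *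
          pochR (α + β + (n : ℝ) + 1) k /
        (pochR (β + 1) k * pochR (a + b + α + 1) k * pochR (a - b + 1) k *
          (Nat.factorial k : ℝ))

/-- The Racah weight function `ρ(s)`. -/
noncomputable def racahW (a b α β : ℝ) (s : ℝ) : ℝ :=
  Real.Gamma (a + s + 1) * Real.Gamma (b + s + α + 1) * Real.Gamma (b + α - s) *
      Real.Gamma (s - a + β + 1) /
    (Real.Gamma (b + s + 1) * Real.Gamma (b - s) * Real.Gamma (s - a + 1) *
      Real.Gamma (a - β + s + 1))

/-- The squared norm `d_n²`. -/
noncomputable def racahD2 (a b α β : ℝ) (n : ℕ) : ℝ :=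
  Real.Gamma (α + n + 1) * Real.Gamma (β + n + 1) * Real.Gamma (a + b + α + n + 1) *
      Real.Gamma (b - a + α + β + n + 1) /
    ((α + β + 2 * n + 1) * Real.Gamma (n + 1) * Real.Gamma (b - a - n) *
      Real.Gamma (α + β + n + 1) * Real.Gamma (a + b - n - β))

/-- The weighted Racah polynomial `R̂_n(s) = R_n(s) √(ρ(s)(2s+1)/d_n²)`. -/
noncomputable def racahHat (a b α β : ℝ) (n : ℕ) (s : ℝ) : ℝ :=
  racahR a b α β n s * Real.sqrt (racahW a b α β s * (2 * s + 1) / racahD2 a b α β n)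

/-- `σ(s) = (s−a)(s+b)(s+a−β)(b+α−s)`. -/
noncomputable def racahSigma (a b α β : ℝ) (s : ℝ) : ℝ :=
  (s - a) * (s + b) * (s + a - β) * (b + α - s)

/-- `τ(s)`. -/
noncomputable def racahTau (a b α β : ℝ) (s : ℝ) : ℝ :=
  a * (α + 1) * (a - β) + b * (b + α) * (β + 1) - (α + 1) * (β + 1) -
    s * (s + 1) * (α + β + 2)

/-- `λ_n = n (n+α+β+1)`. -/
noncomputable def racahLam (α β : ℝ) (n : ℕ) : ℝ := (n : ℝ) * ((n : ℝ) + α + β + 1)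

lemma pochR_succ (x : ℝ) (k : ℕ) : pochR x (k + 1) = pochR x k * (x + k) := by
  simp [pochR, Finset.prod_range_succ]

lemma pochR_zero (x : ℝ) : pochR x 0 = 1 := by simp [pochR]

lemma pochR_shift (x : ℝ) (k : ℕ) : x * pochR (x + 1) k = pochR x k * (x + k) := by
  induction k with
  | zero => simp [pochR_zero]
  | succ k ih =>
    rw [pochR_succ, pochR_succ, ← mul_assoc, ih]; push_cast; ring

lemma pochR_ne (x : ℝ) (k : ℕ) (h : ∀ i < k, x + (i : ℝ) ≠ 0) : pochR x k ≠ 0 := by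
  unfold pochR
  exact Finset.prod_ne_zero_iff.mpr fun i hi => h i (Finset.mem_range.mp hi)

/-- the basis polynomials -/
noncomputable def rphi (a : ℝ) (k : ℕ) (s : ℝ) : ℝ := pochR (a - s) k * pochR (a + s + 1) k

/-- the difference operator, cleared of denominators -/
noncomputable def rop (a b α β t yp y ym : ℝ) : ℝ :=
  t * (racahSigma a b α β t + (2 * t + 1) * racahTau a b α β t) * (yp - y) -
    (t + 1) * racahSigma a b α β t * (y - ym)

lemma rsigma_refl (a b α β t : ℝ) :
    racahSigma a b α β t + (2 * t + 1) * racahTau a b α β t =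
      (a + t + 1) * ((b - t - 1) * (t + 1 + β - a) * (b + α + t + 1)) := by
  unfold racahSigma racahTau; ring

lemma rop_phi (a b α β t : ℝ) (j : ℕ) :
    rop a b α β t (rphi a (j + 1) (t + 1)) (rphi a (j + 1) t) (rphi a (j + 1) (t - 1)) =
      2 * t * (t + 1) * (2 * t + 1) *
        (-racahLam α β (j + 1) * rphi a (j + 1) t +
          (j + 1) * (β + 1 + j) * (a + b + α + 1 + j) * (a - b + 1 + j) * rphi a j t) := by
  have e1 : (a + t + 1) * rphi a (j + 1) (t + 1) =
      (a - t - 1) * (a + t + 1 + j) * (a + t + 2 + j) * rphi a j t := by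
    have h1 := pochR_shift (a + t + 1) (j + 1)
    have h2 := pochR_shift (a - t - 1) j
    rw [pochR_succ (a + t + 1)] at h1
    unfold rphi
    rw [show a - (t + 1) = a - t - 1 by ring, show a + (t + 1) + 1 = a + t + 1 + 1 by ring,
      pochR_succ (a - t - 1), ← h2, show a - t - 1 + 1 = a - t by ring]
    push_cast at h1
    linear_combination (a - t - 1) * pochR (a - t) j * h1
  have e2 : (t - a) * rphi a (j + 1) (t - 1) =
      -((a - t + j) * (a - t + j + 1) * (a + t)) * rphi a j t := by
    have h1 := pochR_shift (a - t) (j + 1)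
    have h2 := pochR_shift (a + t) j
    rw [pochR_succ (a - t)] at h1
    unfold rphi
    rw [show a - (t - 1) = a - t + 1 by ring, show a + (t - 1) + 1 = a + t by ring,
      pochR_succ (a + t), ← h2]
    push_cast at h1
    linear_combination (-(a + t) * pochR (a + t + 1) j) * h1
  have e3 : rphi a (j + 1) t = (a - t + j) * (a + t + 1 + j) * rphi a j t := by
    unfold rphi; rw [pochR_succ, pochR_succ]; ring
  unfold rop
  rw [rsigma_refl, e3]
  unfold racahSigma racahLam
  push_cast
  linear_combination t * ((b - t - 1) * (t + 1 + β - a) * (b + α + t + 1)) * e1 +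
    (t + 1) * ((t + b) * (t + a - β) * (b + α - t)) * e2

/-- the hypergeometric coefficients -/
noncomputable def rcoef (a b α β : ℝ) (n k : ℕ) : ℝ :=
  pochR (-(n : ℝ)) k * pochR (α + β + (n : ℝ) + 1) k /
        (pochR (β + 1) k * pochR (a + b + α + 1) k * pochR (a - b + 1) k *
          (Nat.factorial k : ℝ))

lemma rcoef_succ (a b α β : ℝ) (n k : ℕ) (h1 : pochR (β + 1) (k + 1) ≠ 0)
    (h2 : pochR (a + b + α + 1) (k + 1) ≠ 0) (h3 : pochR (a - b + 1) (k + 1) ≠ 0) :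
    rcoef a b α β n (k + 1) *
      ((k + 1) * (β + 1 + k) * (a + b + α + 1 + k) * (a - b + 1 + k)) =
      (racahLam α β k - racahLam α β n) * rcoef a b α β n k := by
  rw [pochR_succ] at h1 h2 h3
  have h1a := left_ne_zero_of_mul h1
  have h1b := right_ne_zero_of_mul h1
  have h2a := left_ne_zero_of_mul h2
  have h2b := right_ne_zero_of_mul h2
  have h3a := left_ne_zero_of_mul h3
  have h3b := right_ne_zero_of_mul h3
  have hk : (k : ℝ) + 1 ≠ 0 := by positivity
  have hf : (Nat.factorial k : ℝ) ≠ 0 := by positivity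
  unfold rcoef racahLam
  simp only [pochR_succ, Nat.factorial_succ]
  push_cast
  rw [div_mul_eq_mul_div, mul_div_assoc', div_eq_div_iff (by positivity) (by positivity)]
  ring

lemma rop_sum (a b α β t : ℝ) (n m : ℕ)
    (h1 : ∀ k ≤ m, pochR (β + 1) k ≠ 0)
    (h2 : ∀ k ≤ m, pochR (a + b + α + 1) k ≠ 0) (h3 : ∀ k ≤ m, pochR (a - b + 1) k ≠ 0) :
    rop a b α β t (∑ k ∈ Finset.range (m + 1), rcoef a b α β n k * rphi a k (t + 1))
      (∑ k ∈ Finset.range (m + 1), rcoef a b α β n k * rphi a k t)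
      (∑ k ∈ Finset.range (m + 1), rcoef a b α β n k * rphi a k (t - 1)) +
      2 * t * (t + 1) * (2 * t + 1) * racahLam α β n *
        (∑ k ∈ Finset.range (m + 1), rcoef a b α β n k * rphi a k t) =
    2 * t * (t + 1) * (2 * t + 1) *
      ((racahLam α β n - racahLam α β m) * (rcoef a b α β n m * rphi a m t)) := by
  induction m with
  | zero =>
    simp [rop, rphi, pochR_zero, racahLam]; ring
  | succ m ih =>
    have ih := ih (fun k hk => h1 k (by omega)) (fun k hk => h2 k (by omega))
      (fun k hk => h3 k (by omega))
    have hc := rcoef_succ a b α β n m (h1 _ le_rfl) (h2 _ le_rfl) (h3 _ le_rfl)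
    have hp := rop_phi a b α β t m
    rw [Finset.sum_range_succ _ (m + 1), Finset.sum_range_succ _ (m + 1),
      Finset.sum_range_succ _ (m + 1)]
    unfold rop at *
    linear_combination ih + rcoef a b α β n (m + 1) * hp +
      2 * t * (t + 1) * (2 * t + 1) * rphi a m t * hc

lemma racahR_eq (a b α β s : ℝ) (n : ℕ) : racahR a b α β n s =
    (1 / (Nat.factorial n : ℝ)) * pochR (a + b + α + 1) n * pochR (β + 1) n *
    pochR (a - b + 1) n * ∑ k ∈ Finset.range (n + 1), rcoef a b α β n k * rphi a k s := by
  unfold racahR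
  congr 1
  refine Finset.sum_congr rfl fun k _ => ?_
  unfold rcoef rphi
  ring

lemma racahR_diff (a b α β t : ℝ) (n : ℕ)
    (h1 : ∀ k ≤ n, pochR (β + 1) k ≠ 0)
    (h2 : ∀ k ≤ n, pochR (a + b + α + 1) k ≠ 0) (h3 : ∀ k ≤ n, pochR (a - b + 1) k ≠ 0) :
    rop a b α β t (racahR a b α β n (t + 1)) (racahR a b α β n t) (racahR a b α β n (t - 1)) +
      2 * t * (t + 1) * (2 * t + 1) * racahLam α β n * racahR a b α β n t = 0 := by
  have h := rop_sum a b α β t n n h1 h2 h3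
  simp only [racahR_eq]
  unfold rop at *
  linear_combination ((1 / (Nat.factorial n : ℝ)) * pochR (a + b + α + 1) n * pochR (β + 1) n *
    pochR (a - b + 1) n) * h

lemma racahW_pos (N : ℕ) (a α β b : ℝ) (ha : -(1/2) < a) (hα : -1 < α)
    (hβ1 : -1 < β) (hβ2 : β < 2 * a + 1) (hb : b = a + N) (s : ℝ) (h0 : a ≤ s)
    (h1 : s + 1 ≤ b) : 0 < racahW a b α β s := by
  unfold racahW
  have g1 := Real.Gamma_pos_of_pos (show 0 < a + s + 1 by linarith)
  have g2 := Real.Gamma_pos_of_pos (show 0 < b + s + α + 1 by linarith)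
  have g3 := Real.Gamma_pos_of_pos (show 0 < b + α - s by linarith)
  have g4 := Real.Gamma_pos_of_pos (show 0 < s - a + β + 1 by linarith)
  have g5 := Real.Gamma_pos_of_pos (show 0 < b + s + 1 by linarith)
  have g6 := Real.Gamma_pos_of_pos (show 0 < b - s by linarith)
  have g7 := Real.Gamma_pos_of_pos (show 0 < s - a + 1 by linarith)
  have g8 := Real.Gamma_pos_of_pos (show 0 < a - β + s + 1 by linarith)
  positivity

lemma sqrt_chain (u v d : ℝ) (hu : 0 < u) (hv : 0 < v) :
    Real.sqrt (u / v) * Real.sqrt (v / d) = Real.sqrt (u / d) := by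
  rw [← Real.sqrt_mul (by positivity)]
  congr 1
  field_simp

theorem racah_three_term_recurrence_variable
    (N : ℕ) (hN : 2 ≤ N) (a α β b : ℝ) (ha : -(1/2) < a) (hα : -1 < α)
    (hβ1 : -1 < β) (hβ2 : β < 2 * a + 1) (hb : b = a + N)
    (n : ℕ) (hn : n ≤ N - 1) (x : ℕ) (hx2 : 2 ≤ x) (hx : x ≤ N - 1)
    (hden : (a + x - 1) *
        (racahSigma a b α β (a + x - 1) +
          (2 * (a + x) - 1) * racahTau a b α β (a + x - 1)) ≠ 0) :
    racahHat a b α β n (a + x) =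
      ((2 * (a + x) - 1) *
            (racahSigma a b α β (a + x - 1) +
              (a + x - 1) * racahTau a b α β (a + x - 1) -
              2 * racahLam α β n * (a + x) * (a + x - 1)) /
          ((a + x - 1) *
            (racahSigma a b α β (a + x - 1) +
              (2 * (a + x) - 1) * racahTau a b α β (a + x - 1)))) *
        Real.sqrt (racahW a b α β (a + x) * (2 * (a + x) + 1) /
          (racahW a b α β (a + x - 1) * (2 * (a + x) - 1))) *
        racahHat a b α β n (a + x - 1) -
      ((a + x) * racahSigma a b α β (a + x - 1) /
          ((a + x - 1) *
            (racahSigma a b α β (a + x - 1) +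
              (2 * (a + x) - 1) * racahTau a b α β (a + x - 1)))) *
        Real.sqrt (racahW a b α β (a + x) * (2 * (a + x) + 1) /
          (racahW a b α β (a + x - 2) * (2 * (a + x) - 3))) *
        racahHat a b α β n (a + x - 2) := by
  have hxR : (2 : ℝ) ≤ x := by exact_mod_cast hx2
  have hxN : (x : ℝ) + 1 ≤ N := by exact_mod_cast (by omega : x + 1 ≤ N)
  have hnN : (n : ℝ) + 1 ≤ N := by exact_mod_cast (by omega : n + 1 ≤ N)
  have hNR : (2 : ℝ) ≤ N := by exact_mod_cast hN
  have W0 := racahW_pos N a α β b ha hα hβ1 hβ2 hb (a + x) (by linarith) (by linarith)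
  have W1 := racahW_pos N a α β b ha hα hβ1 hβ2 hb (a + x - 1) (by linarith) (by linarith)
  have W2 := racahW_pos N a α β b ha hα hβ1 hβ2 hb (a + x - 2) (by linarith) (by linarith)
  have hd := racahR_diff a b α β (a + x - 1) n
    (fun k _ => pochR_ne _ _ fun i _ => by
      have : (0 : ℝ) ≤ i := by positivity
      linarith)
    (fun k _ => pochR_ne _ _ fun i _ => by
      have : (0 : ℝ) ≤ i := by positivity
      linarith)
    (fun k hk => pochR_ne _ _ fun i hi => by
      have : (i : ℝ) + 1 ≤ n := by exact_mod_cast (by omega : i + 1 ≤ n)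
      linarith)
  rw [show a + x - 1 + 1 = a + (x : ℝ) by ring, show a + x - 1 - 1 = a + (x : ℝ) - 2 by ring] at hd
  have c1 := sqrt_chain (racahW a b α β (a + x) * (2 * (a + x) + 1))
    (racahW a b α β (a + x - 1) * (2 * (a + x) - 1)) (racahD2 a b α β n)
    (mul_pos W0 (by linarith)) (mul_pos W1 (by linarith))
  have c2 := sqrt_chain (racahW a b α β (a + x) * (2 * (a + x) + 1))
    (racahW a b α β (a + x - 2) * (2 * (a + x) - 3)) (racahD2 a b α β n)
    (mul_pos W0 (by linarith)) (mul_pos W2 (by linarith))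
  unfold racahHat
  rw [show 2 * (a + x - 1) + 1 = 2 * (a + (x : ℝ)) - 1 by ring,
    show 2 * (a + x - 2) + 1 = 2 * (a + (x : ℝ)) - 3 by ring, ← c1]
  have c3 := c2.trans c1.symm
  unfold rop at hd
  generalize Real.sqrt (racahW a b α β (a + x) * (2 * (a + x) + 1) /
    (racahW a b α β (a + x - 1) * (2 * (a + x) - 1))) = p1 at *
  generalize Real.sqrt (racahW a b α β (a + x) * (2 * (a + x) + 1) /
    (racahW a b α β (a + x - 2) * (2 * (a + x) - 3))) = p2 at *
  generalize Real.sqrt (racahW a b α β (a + x - 1) * (2 * (a + x) - 1) /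
    racahD2 a b α β n) = q1 at *
  generalize Real.sqrt (racahW a b α β (a + x - 2) * (2 * (a + x) - 3) /
    racahD2 a b α β n) = q2 at *
  generalize racahR a b α β n (a + x) = y0 at *
  generalize racahR a b α β n (a + x - 1) = y1 at *
  generalize racahR a b α β n (a + x - 2) = y2 at *
  generalize racahSigma a b α β (a + x - 1) = S at *
  generalize racahTau a b α β (a + x - 1) = T at *
  generalize racahLam α β n = L at *
  generalize a + (x : ℝ) = s at *
  generalize hD : (s - 1) * (S + (2 * s - 1) * T) = D at *
  have key : D * y0 = (2 * s - 1) * (S + (s - 1) * T - 2 * L * s * (s - 1)) * y1 -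
      s * S * y2 := by
    rw [← hD]; linear_combination hd
  have key2 : y0 = ((2 * s - 1) * (S + (s - 1) * T - 2 * L * s * (s - 1)) / D) * y1 -
      (s * S / D) * y2 := by
    field_simp
    linear_combination key
  linear_combination p1 * q1 * key2 + s * S / D * y2 * c3
end

section
/- In the special case a = α = β = 0 (so b = N), the weighted Racah polynomials satisfy the symmetry relation R̂_s(n) = (−1)^{s−n}·R̂_n(s) for all integers n, s with 0 ≤ n ≤ N−1 and 0 ≤ s ≤ N−1 (i.e., the matrix (R̂_n(s)) is skew-persymmetric up to the sign (−1)^{s−n} under exchange of degree and argument). -/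
open Finset

theorem pochR_neg_zero (n k : ℕ) (h : n < k) : pochR (-(n : ℝ)) k = 0 := by
  unfold pochR
  exact Finset.prod_eq_zero (Finset.mem_range.mpr h) (by simp)

theorem pochR_one (n : ℕ) : pochR 1 n = (Nat.factorial n : ℝ) := by
  induction n with
  | zero => simp [pochR]
  | succ m ih =>
    have : pochR 1 (m + 1) = pochR 1 m * (1 + m) := by
      unfold pochR; rw [Finset.prod_range_succ]
    rw [this, ih, Nat.factorial_succ]; push_cast; ring

theorem pochR_up (N n : ℕ) :
    pochR ((N : ℝ) + 1) n * (Nat.factorial N : ℝ) = (Nat.factorial (N + n) : ℝ) := by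
  induction n with
  | zero => simp [pochR]
  | succ m ih =>
    have : pochR ((N : ℝ) + 1) (m + 1) = pochR ((N : ℝ) + 1) m * (N + 1 + m) := by
      unfold pochR; rw [Finset.prod_range_succ]
    rw [this, ← add_assoc, Nat.factorial_succ]; push_cast; rw [← ih]; ring

theorem pochR_down (M n : ℕ) (h : n ≤ M) :
    pochR (-(M : ℝ)) n * (Nat.factorial (M - n) : ℝ) = (-1) ^ n * (Nat.factorial M : ℝ) := by
  induction n with
  | zero => simp [pochR]
  | succ m ih =>
    have h1 : pochR (-(M : ℝ)) (m + 1) = pochR (-(M : ℝ)) m * (-(M : ℝ) + m) := by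
      unfold pochR; rw [Finset.prod_range_succ]
    have ih' := ih (by omega)
    obtain ⟨d, rfl⟩ : ∃ d, M = m + 1 + d := ⟨M - (m + 1), by omega⟩
    have e1 : m + 1 + d - m = d + 1 := by omega
    have e2 : m + 1 + d - (m + 1) = d := by omega
    rw [e1, Nat.factorial_succ] at ih'
    rw [h1, e2, pow_succ]
    push_cast at ih' ⊢
    linear_combination (-1) * ih'

/-- The symmetric hypergeometric sum. -/
noncomputable def symTerm (N : ℝ) (n s k : ℕ) : ℝ :=
  pochR (-(n : ℝ)) k * pochR (0 - (s : ℝ)) k * pochR (0 + (s : ℝ) + 1) k *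
          pochR (0 + 0 + (n : ℝ) + 1) k /
        (pochR (0 + 1) k * pochR (0 + N + 0 + 1) k * pochR (0 - N + 1) k *
          (Nat.factorial k : ℝ))

theorem symTerm_comm (N : ℝ) (n s k : ℕ) : symTerm N n s k = symTerm N s n k := by
  unfold symTerm
  simp only [zero_sub, zero_add]
  ring

theorem symTerm_ext (N : ℝ) (n s m : ℕ) :
    ∑ k ∈ Finset.range (n + 1), symTerm N n s k =
      ∑ k ∈ Finset.range (n + m + 1), symTerm N n s k := by
  apply Finset.sum_subset
  · intro k; simp only [Finset.mem_range]; omega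
  · intro k _ hk
    simp only [Finset.mem_range] at hk
    unfold symTerm
    rw [pochR_neg_zero n k (by omega)]; simp

theorem symSum_comm (N : ℝ) (n s : ℕ) :
    ∑ k ∈ Finset.range (n + 1), symTerm N n s k =
      ∑ k ∈ Finset.range (s + 1), symTerm N s n k := by
  rw [symTerm_ext N n s s, symTerm_ext N s n n, add_comm s n]
  exact Finset.sum_congr rfl fun k _ => symTerm_comm N n s k

theorem racahHat_eq (M n s : ℕ) (hn : n ≤ M) (hs : s ≤ M) :
    racahHat 0 ((M + 1 : ℕ) : ℝ) 0 0 n (s : ℝ) =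
      (-1) ^ n * (Real.sqrt ((2 * s + 1) * (2 * n + 1)) *
        ((Nat.factorial M : ℝ) / (Nat.factorial (M + 1) : ℝ))) *
        ∑ k ∈ Finset.range (n + 1), symTerm ((M + 1 : ℕ) : ℝ) n s k := by
  have g1 : ∀ m : ℕ, Real.Gamma ((m : ℝ) + 1) = (Nat.factorial m : ℝ) :=
    fun m => Real.Gamma_nat_eq_factorial m
  have g2 : ∀ m : ℕ, Real.Gamma (((M + 1 : ℕ) : ℝ) + m + 1) = (Nat.factorial (M + 1 + m) : ℝ) := by
    intro m; rw [← g1]; push_cast; rfl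
  have g3 : ∀ m : ℕ, m ≤ M →
      Real.Gamma (((M + 1 : ℕ) : ℝ) - m) = (Nat.factorial (M - m) : ℝ) := by
    intro m hm; rw [← g1, Nat.cast_sub hm]; push_cast; congr 1; ring
  have f : ∀ m : ℕ, (Nat.factorial m : ℝ) ≠ 0 := fun m => by positivity
  have hW : racahW 0 ((M + 1 : ℕ) : ℝ) 0 0 (s : ℝ) = 1 := by
    unfold racahW
    simp only [zero_add, add_zero, sub_zero, g1, g2, g3 s hs]
    have := f s; have := f (M + 1 + s); have := f (M - s)
    field_simp
  have hD : racahD2 0 ((M + 1 : ℕ) : ℝ) 0 0 n =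
      ((Nat.factorial (M + 1 + n) : ℝ) / (Nat.factorial (M - n) : ℝ)) ^ 2 / (2 * n + 1) := by
    unfold racahD2
    simp only [zero_add, add_zero, sub_zero, g1, g2, g3 n hn]
    have := f n; have := f (M + 1 + n); have := f (M - n)
    field_simp
  have hsq : Real.sqrt (racahW 0 ((M + 1 : ℕ) : ℝ) 0 0 (s : ℝ) * (2 * s + 1) /
      racahD2 0 ((M + 1 : ℕ) : ℝ) 0 0 n) = Real.sqrt ((2 * s + 1) * (2 * n + 1)) *
      ((Nat.factorial (M - n) : ℝ) / (Nat.factorial (M + 1 + n) : ℝ)) := by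
    rw [hW, hD]
    have : (1 * (2 * (s : ℝ) + 1) /
        (((Nat.factorial (M + 1 + n) : ℝ) / (Nat.factorial (M - n) : ℝ)) ^ 2 / (2 * n + 1)))
        = ((2 * s + 1) * (2 * n + 1)) *
          ((Nat.factorial (M - n) : ℝ) / (Nat.factorial (M + 1 + n) : ℝ)) ^ 2 := by
      have := f (M + 1 + n); have := f (M - n)
      field_simp
    rw [this, Real.sqrt_mul (by positivity), Real.sqrt_sq (by positivity)]
  have hR : racahR 0 ((M + 1 : ℕ) : ℝ) 0 0 n (s : ℝ) =
      (1 / (Nat.factorial n : ℝ)) * pochR (((M + 1 : ℕ) : ℝ) + 1) n * pochR 1 n *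
        pochR (-(M : ℝ)) n * ∑ k ∈ Finset.range (n + 1), symTerm ((M + 1 : ℕ) : ℝ) n s k := by
    have e : (0 : ℝ) - ((M + 1 : ℕ) : ℝ) + 1 = -(M : ℝ) := by push_cast; ring
    rw [← e]
    unfold racahR symTerm
    simp only [zero_add, add_zero]
  unfold racahHat
  have u := pochR_up (M + 1) n
  have d := pochR_down M n hn
  rw [hsq, hR, pochR_one]
  rw [← eq_div_iff (f _)] at u d
  rw [u, d]
  have := f n; have := f (M + 1 + n); have := f (M - n); have := f (M + 1)
  field_simp

theorem racah_special_case_symmetry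
    (N : ℕ) (hN : 2 ≤ N) (n s : ℕ) (hn : n ≤ N - 1) (hs : s ≤ N - 1) :
    racahHat 0 (N : ℝ) 0 0 s (n : ℝ) =
      (-1 : ℝ) ^ ((s : ℤ) - (n : ℤ)) * racahHat 0 (N : ℝ) 0 0 n (s : ℝ) := by
  obtain ⟨M, rfl⟩ : ∃ M, N = M + 1 := ⟨N - 1, by omega⟩
  rw [racahHat_eq M s n (by omega) (by omega), racahHat_eq M n s (by omega) (by omega),
    symSum_comm _ s n, mul_comm (2 * (n : ℝ) + 1)]
  have hsgn : (-1 : ℝ) ^ ((s : ℤ) - (n : ℤ)) * (-1) ^ n = (-1) ^ s := by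
    rw [zpow_sub₀ (by norm_num), zpow_natCast, zpow_natCast]
    have : (-1 : ℝ) ^ n ≠ 0 := pow_ne_zero _ (by norm_num)
    field_simp
  rw [← hsgn]
  ring
end
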